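/- Fourier transform of the Cauchy kernel: for every z ∈ ℂ with Im(z) ≠ 0, the Fourier transform (in the L^2 sense, with convention φ̂(k) = ∫ e^{ikx} φ(x) dx) of the function φ_z(x) = 1/(z−x) is the function t ↦ −sgn(Im z)·2πi·1_{Im(z)·t > 0}·e^{itz}; consequently φ_z belongs to the Sobolev space H_s for every s ∈ ℝ. -/

import Mathlib

/- Formalization of results from "Empirical spectral distributions of a Hermitian matrix
perturbed by a small random matrix" (arXiv:1701.02597). -/

open MeasureTheory Filter Set Complex
open scoped Topology ENNReal NNReal

noncomputable section

/-- The claimed Fourier transform of the Cauchy kernel `φ_z(x) = 1/(z-x)`: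
`t ↦ -sgn(Im z)·2πi·𝟙_{Im(z)·t>0}·e^{itz}`. -/
def cauchyFT (z : ℂ) (t : ℝ) : ℂ :=
  -((Real.sign z.im : ℝ) : ℂ) * (2 * (Real.pi : ℂ) * Complex.I) *
    (if 0 < z.im * t then 1 else 0) * Complex.exp (Complex.I * t * z)

/-! Parametrise by the Fourier side. With Mathlib's normalisation, the function `cauchyFT z` decays
exponentially, so it lies in `L¹ ∩ L²`, and integrating an exponential over a half line gives
`𝓕 (cauchyFT z) w = 2π φ_z(2πw)`. Hence, after the substitution `u = 2πw`, the truncated integrals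
of the theorem are the inverse Fourier transforms of truncations of `𝓕 (cauchyFT z)`. By Plancherel,
their `L²` distance to `cauchyFT z` is that between `𝓕 (cauchyFT z)` and its truncation, which
tends to zero. The Sobolev bound is the exponential decay of `cauchyFT z`.
-/

section LpTruncation

variable {α ι E : Type*} [MeasurableSpace α] [NormedAddCommGroup E] {μ : Measure α} {l : Filter ι}

theorem tendsto_eLpNorm_indicator_sub_of_aecover [l.IsCountablyGenerated] {s : ι → Set α}
    (hs : AECover μ l s) {p : ℝ≥0∞} (hp : p ≠ ∞) {f : α → E} (hf : MemLp f p μ) :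
    Tendsto (fun i => eLpNorm ((s i).indicator f - f) p μ) l (𝓝 0) := by
  rcases eq_or_ne p 0 with rfl | hp0
  · simpa using tendsto_const_nhds
  have hp_pos : 0 < p.toReal := ENNReal.toReal_pos hp0 hp
  have h_lintegral : Tendsto (fun i => ∫⁻ x, ‖((s i).indicator f - f) x‖ₑ ^ p.toReal ∂μ) l
      (𝓝 (∫⁻ _, 0 ∂μ)) := by
    refine tendsto_lintegral_filter_of_dominated_convergence' (fun x => ‖f x‖ₑ ^ p.toReal)
      (.of_forall fun i => ?_) (.of_forall fun i => .of_forall fun x => ?_)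
      (lintegral_rpow_enorm_lt_top_of_eLpNorm_lt_top hp0 hp hf.2).ne ?_
    · exact ((hf.1.indicator (hs.measurableSet i)).sub hf.1).enorm.pow_const _
    · by_cases hx : x ∈ s i <;> simp [hx, hp_pos]
    · filter_upwards [hs.ae_eventually_mem] with x hx
      refine tendsto_const_nhds.congr' (hx.mono fun i hi => ?_)
      simp [hi, hp_pos]
  have h_rpow := (ENNReal.continuous_rpow_const (y := 1 / p.toReal)).tendsto _ |>.comp h_lintegral
  simpa [eLpNorm_eq_lintegral_rpow_enorm_toReal hp0 hp, Function.comp_def, hp_pos] using h_rpow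

end LpTruncation

section ExponentialDecay

variable {V : Type*} [NormedAddCommGroup V] [NormedSpace ℝ V] [FiniteDimensional ℝ V]
  [MeasurableSpace V] [BorelSpace V] {μ : Measure V} [μ.IsAddHaarMeasure]

theorem integrable_one_add_norm_rpow_mul_exp_neg (s : ℝ) {b : ℝ} (hb : 0 < b) :
    Integrable (fun x : V => (1 + ‖x‖) ^ s * Real.exp (-b * ‖x‖)) μ := by
  have h_cont : Continuous fun x : V => (1 + ‖x‖) ^ s * Real.exp (-b * ‖x‖) :=
    ((continuous_const.add continuous_norm).rpow_const
      fun x => .inl (by positivity : 1 + ‖x‖ ≠ 0)).mul (by fun_prop)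
  let r : ℝ := Module.finrank ℝ V + 1
  have h_atTop : (fun y : ℝ => y ^ s * Real.exp (-b * y)) =O[atTop] fun y => y ^ (-r) := by
    refine ((Asymptotics.isBigO_refl (fun y : ℝ => y ^ s) atTop).mul
      (isLittleO_exp_neg_mul_rpow_atTop hb (-r - s)).isBigO).congr' .rfl ?_
    filter_upwards [eventually_gt_atTop 0] with y hy
    rw [← Real.rpow_add hy]
    ring_nf
  have h_bigO : (fun x : V => (1 + ‖x‖) ^ s * Real.exp (-b * ‖x‖)) =O[cocompact V]
      fun x => (1 + ‖x‖) ^ (-r) := by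
    have h_comp := (h_atTop.comp_tendsto (tendsto_atTop_add_const_left _ 1
      (tendsto_norm_cocompact_atTop (E := V)))).const_mul_left (Real.exp b)
    refine h_comp.congr_left fun x => ?_
    rw [Function.comp_apply, mul_left_comm, ← Real.exp_add]
    ring_nf
  exact h_cont.locallyIntegrable.integrable_of_isBigO_cocompact h_bigO
    ((integrable_one_add_norm (lt_add_one _)).integrableAtFilter _)

end ExponentialDecay

section Plancherel

open FourierTransform SchwartzMap

variable {V F : Type*} [NormedAddCommGroup V] [MeasurableSpace V] [BorelSpace V]
  [NormedAddCommGroup F]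

theorem ae_eq_of_integral_schwartzMap_smul_eq [NormedSpace ℝ V] [FiniteDimensional ℝ V]
    [NormedSpace ℂ F] [CompleteSpace F] {μ : Measure V} {f g : V → F}
    (hf : LocallyIntegrable f μ) (hg : LocallyIntegrable g μ)
    (h : ∀ φ : 𝓢(V, ℂ), ∫ x, φ x • f x ∂μ = ∫ x, φ x • g x ∂μ) : f =ᵐ[μ] g := by
  refine ae_eq_of_integral_contDiff_smul_eq hf hg fun φ hφ hφ_supp => ?_
  have hφ_supp' : HasCompactSupport (Complex.ofRealCLM ∘ φ) := hφ_supp.comp_left rfl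
  simpa using h (hφ_supp'.toSchwartzMap (Complex.ofRealCLM.contDiff.comp hφ))

variable [InnerProductSpace ℝ V] [FiniteDimensional ℝ V] [InnerProductSpace ℂ F] [CompleteSpace F]
  {f g : V → F}

theorem fourier_toLp_ae_eq (hf₁ : Integrable f) (hf₂ : MemLp f 2) :
    (𝓕 (hf₂.toLp f) : Lp F 2 (volume : Measure V)) =ᵐ[volume] 𝓕 f := by
  have h_cont : Continuous (𝓕 f) :=
    VectorFourier.fourierIntegral_continuous Real.continuous_fourierChar continuous_inner hf₁
  refine ae_eq_of_integral_schwartzMap_smul_eq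
    ((Lp.memLp (𝓕 (hf₂.toLp f))).locallyIntegrable one_le_two)
    h_cont.locallyIntegrable fun φ => ?_
  calc
    ∫ x, φ x • (𝓕 (hf₂.toLp f) : Lp F 2 (volume : Measure V)) x = ∫ x, 𝓕 φ x • hf₂.toLp f x := by
      simpa using congr($(Lp.fourier_toTemperedDistribution_eq (hf₂.toLp f)) φ).symm
    _ = ∫ x, 𝓕 φ x • f x :=
      integral_congr_ae (hf₂.coeFn_toLp.mono fun x hx => congrArg (𝓕 φ x • ·) hx)
    _ = ∫ x, φ x • 𝓕 f x := by
      simpa [SchwartzMap.fourier_coe] using!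
        VectorFourier.integral_fourierIntegral_smul_eq_flip (L := innerₗ V)
          Real.continuous_fourierChar continuous_inner φ.integrable hf₁

theorem fourierInv_toLp_ae_eq (hf₁ : Integrable f) (hf₂ : MemLp f 2) :
    (𝓕⁻ (hf₂.toLp f) : Lp F 2 (volume : Measure V)) =ᵐ[volume] 𝓕⁻ f := by
  have h_inner : Continuous fun p : V × V => (-innerₗ V) p.1 p.2 := continuous_inner.neg
  have h_cont : Continuous (𝓕⁻ f) :=
    VectorFourier.fourierIntegral_continuous Real.continuous_fourierChar h_inner hf₁
  refine ae_eq_of_integral_schwartzMap_smul_eq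
    ((Lp.memLp (𝓕⁻ (hf₂.toLp f))).locallyIntegrable one_le_two)
    h_cont.locallyIntegrable fun φ => ?_
  calc
    ∫ x, φ x • (𝓕⁻ (hf₂.toLp f) : Lp F 2 (volume : Measure V)) x = ∫ x, 𝓕⁻ φ x • hf₂.toLp f x := by
      simpa using congr($(Lp.fourierInv_toTemperedDistribution_eq (hf₂.toLp f)) φ).symm
    _ = ∫ x, 𝓕⁻ φ x • f x :=
      integral_congr_ae (hf₂.coeFn_toLp.mono fun x hx => congrArg (𝓕⁻ φ x • ·) hx)
    _ = ∫ x, φ x • 𝓕⁻ f x := by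
      have h_flip : (-innerₗ V).flip = -innerₗ V := by ext; simp [real_inner_comm]
      have h_fubini := VectorFourier.integral_fourierIntegral_smul_eq_flip (L := -innerₗ V)
        Real.continuous_fourierChar h_inner (φ.integrable (μ := volume)) hf₁
      rw [h_flip] at h_fubini
      rw [SchwartzMap.fourierInv_coe]
      exact h_fubini

theorem memLp_two_fourier (hf₁ : Integrable f) (hf₂ : MemLp f 2) : MemLp (𝓕 f) 2 :=
  (memLp_congr_ae (fourier_toLp_ae_eq hf₁ hf₂)).1 (Lp.memLp _)

theorem eLpNorm_fourierInv_sub (hg₁ : Integrable g) (hg₂ : MemLp g 2)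
    (hf₁ : Integrable f) (hf₂ : MemLp f 2) :
    eLpNorm (𝓕⁻ g - f) 2 volume = eLpNorm (g - 𝓕 f) 2 volume := by
  let Lf : Lp F 2 (volume : Measure V) := hf₂.toLp f
  let Lg : Lp F 2 (volume : Measure V) := hg₂.toLp g
  have h_left : ⇑(𝓕⁻ Lg - Lf) =ᵐ[volume] 𝓕⁻ g - f :=
    (Lp.coeFn_sub _ _).trans ((fourierInv_toLp_ae_eq hg₁ hg₂).sub hf₂.coeFn_toLp)
  have h_right : ⇑(Lg - 𝓕 Lf) =ᵐ[volume] g - 𝓕 f :=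
    (Lp.coeFn_sub _ _).trans (hg₂.coeFn_toLp.sub (fourier_toLp_ae_eq hf₁ hf₂))
  have h_fourier : 𝓕 (𝓕⁻ Lg - Lf) = Lg - 𝓕 Lf := by
    have h_sub : 𝓕 (𝓕⁻ Lg - Lf) = 𝓕 (𝓕⁻ Lg) - 𝓕 Lf := (Lp.fourierTransformₗᵢ V F).map_sub _ _
    rw [h_sub, fourier_fourierInv_eq]
  calc
    eLpNorm (𝓕⁻ g - f) 2 volume = ‖𝓕⁻ Lg - Lf‖ₑ := by rw [Lp.enorm_def, eLpNorm_congr_ae h_left]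
    _ = ‖𝓕 (𝓕⁻ Lg - Lf)‖ₑ := ((Lp.fourierTransformₗᵢ V F).enorm_map _).symm
    _ = eLpNorm (g - 𝓕 f) 2 volume := by
      rw [h_fourier, Lp.enorm_def, eLpNorm_congr_ae h_right]

theorem tendsto_eLpNorm_fourierInv_indicator_fourier_sub {ι : Type*} {l : Filter ι}
    [l.IsCountablyGenerated] {s : ι → Set V} (hs : AECover volume l s)
    (hs_fin : ∀ i, volume (s i) ≠ ∞) (hf₁ : Integrable f) (hf₂ : MemLp f 2) :
    Tendsto (fun i => eLpNorm (𝓕⁻ ((s i).indicator (𝓕 f)) - f) 2 volume) l (𝓝 0) := by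
  have h_memLp : MemLp (𝓕 f) 2 := memLp_two_fourier hf₁ hf₂
  refine (tendsto_eLpNorm_indicator_sub_of_aecover hs ENNReal.ofNat_ne_top h_memLp).congr
    fun i => ?_
  have : IsFiniteMeasure (volume.restrict (s i)) := isFiniteMeasure_restrict.2 (hs_fin i)
  have h_int : Integrable ((s i).indicator (𝓕 f)) :=
    (integrable_indicator_iff (hs.measurableSet i)).2
      ((h_memLp.restrict (s i)).integrable one_le_two)
  exact (eLpNorm_fourierInv_sub h_int (h_memLp.indicator (hs.measurableSet i)) hf₁ hf₂).symm

end Plancherel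

section AngularFrequency

open FourierTransform

variable {E : Type*} [NormedAddCommGroup E] [NormedSpace ℂ E]

theorem setIntegral_cexp_smul_eq_fourierInv {s : Set ℝ} (hs : MeasurableSet s) (g : ℝ → E)
    (k : ℝ) :
    ∫ u in s, Complex.exp (Complex.I * k * u) • g u =
      𝓕⁻ (((fun w : ℝ => 2 * Real.pi * w) ⁻¹' s).indicator
        fun w => (2 * Real.pi) • g (2 * Real.pi * w)) k := by
  let G : ℝ → E := s.indicator fun u => Complex.exp (Complex.I * k * u) • g u
  have h_subst : ∫ u, G u = (2 * Real.pi) • ∫ w, G (2 * Real.pi * w) := by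
    rw [Measure.integral_comp_mul_left, abs_of_pos (by positivity),
      smul_inv_smul₀ Real.two_pi_pos.ne']
  rw [← integral_indicator hs, h_subst, ← integral_smul, Real.fourierInv_eq']
  congr 1 with w
  by_cases hw : 2 * Real.pi * w ∈ s
  · simp only [G, indicator_of_mem hw, indicator_of_mem (mem_preimage.2 hw)]
    rw [smul_comm]
    congr 2
    simp
    ring_nf
  · simp [G, hw]

end AngularFrequency

section CauchyKernel

open FourierTransform

theorem cauchyFT_neg (z : ℂ) (t : ℝ) : cauchyFT z (-t) = -cauchyFT (-z) t := by
  by_cases ht : z.im * t < 0 <;> simp [cauchyFT, Real.sign_neg, ht]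

theorem cauchyFT_of_im_pos {z : ℂ} (hz : 0 < z.im) :
    cauchyFT z = (Ioi 0).indicator
      fun t : ℝ => -(2 * Real.pi * Complex.I) * Complex.exp (Complex.I * t * z) := by
  ext t
  by_cases ht : 0 < t <;> simp [cauchyFT, Real.sign_of_pos hz, hz, ht]

theorem measurable_cauchyFT (z : ℂ) : Measurable (cauchyFT z) := by
  have h_set : MeasurableSet {t : ℝ | 0 < z.im * t} :=
    measurableSet_lt measurable_const (by fun_prop)
  exact (measurable_const.mul (measurable_const.ite h_set measurable_const)).mul (by fun_prop)

theorem norm_cauchyFT_le (z : ℂ) (t : ℝ) :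
    ‖cauchyFT z t‖ ≤ 2 * Real.pi * Real.exp (-|z.im| * ‖t‖) := by
  have h_sign : |Real.sign z.im| ≤ 1 := by
    rcases Real.sign_apply_eq z.im with h | h | h <;> simp [h]
  by_cases ht : 0 < z.im * t
  · have h_exp : ‖Complex.exp (Complex.I * t * z)‖ = Real.exp (-|z.im| * ‖t‖) := by
      rw [Real.norm_eq_abs, neg_mul, ← abs_mul, abs_of_pos ht]
      simp [Complex.norm_exp, mul_comm]
    calc
      ‖cauchyFT z t‖ = |Real.sign z.im| * (2 * Real.pi) * Real.exp (-|z.im| * ‖t‖) := by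
        simp [cauchyFT, ht, h_exp, abs_of_pos Real.pi_pos]
      _ ≤ 1 * (2 * Real.pi) * Real.exp (-|z.im| * ‖t‖) := by gcongr
      _ = 2 * Real.pi * Real.exp (-|z.im| * ‖t‖) := by rw [one_mul]
  · simp only [cauchyFT, ht, if_false, mul_zero, zero_mul, norm_zero]
    positivity

theorem integrable_cauchyFT {z : ℂ} (hz : z.im ≠ 0) : Integrable (cauchyFT z) := by
  have h_exp : Integrable fun t : ℝ => Real.exp (-|z.im| * ‖t‖) := by
    simpa using integrable_one_add_norm_rpow_mul_exp_neg (V := ℝ) 0 (abs_pos.2 hz)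
  exact (h_exp.const_mul (2 * Real.pi)).mono' (measurable_cauchyFT z).aestronglyMeasurable
    (.of_forall (norm_cauchyFT_le z))

theorem integrable_rpow_mul_norm_cauchyFT_sq {z : ℂ} (hz : z.im ≠ 0) (s : ℝ) :
    Integrable (fun k : ℝ => (1 + 2 * |k|) ^ (2 * s) * ‖cauchyFT z k‖ ^ 2) := by
  have h_weight : Integrable fun k : ℝ =>
      (1 + ‖2 * k‖) ^ (2 * s) * Real.exp (-|z.im| * ‖2 * k‖) :=
    (integrable_one_add_norm_rpow_mul_exp_neg (2 * s) (abs_pos.2 hz)).comp_mul_left' two_ne_zero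
  refine (h_weight.const_mul ((2 * Real.pi) ^ 2)).mono' ?_ (.of_forall fun k => ?_)
  · have := measurable_cauchyFT z
    fun_prop
  have h_norm : ‖2 * k‖ = 2 * |k| := by simp
  rw [Real.norm_of_nonneg (by positivity), h_norm]
  calc
    (1 + 2 * |k|) ^ (2 * s) * ‖cauchyFT z k‖ ^ 2
      ≤ (1 + 2 * |k|) ^ (2 * s) * (2 * Real.pi * Real.exp (-|z.im| * |k|)) ^ 2 := by
        gcongr
        exact norm_cauchyFT_le z k
    _ = (2 * Real.pi) ^ 2 * ((1 + 2 * |k|) ^ (2 * s) * Real.exp (-|z.im| * (2 * |k|))) := by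
        rw [mul_pow, ← Real.exp_nat_mul, mul_left_comm]
        push_cast
        ring_nf

theorem memLp_two_cauchyFT {z : ℂ} (hz : z.im ≠ 0) : MemLp (cauchyFT z) 2 := by
  rw [memLp_two_iff_integrable_sq_norm (measurable_cauchyFT z).aestronglyMeasurable]
  simpa using integrable_rpow_mul_norm_cauchyFT_sq hz 0

theorem fourier_cauchyFT_of_im_pos {z : ℂ} (hz : 0 < z.im) (w : ℝ) :
    𝓕 (cauchyFT z) w = (2 * Real.pi) • (1 / (z - (2 * Real.pi * w : ℝ))) := by
  let a : ℂ := Complex.I * (z - (2 * Real.pi * w : ℝ))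
  have ha_re : a.re < 0 := by simpa [a] using hz
  have hz_sub : z - (2 * Real.pi * w : ℝ) ≠ 0 := fun h => by
    simpa [hz.ne'] using congrArg Complex.im h
  have h_integrand : (fun t : ℝ => Complex.exp (↑(-2 * Real.pi * t * w) * Complex.I) •
      cauchyFT z t) = (Ioi 0).indicator
        fun t : ℝ => -(2 * Real.pi * Complex.I) * Complex.exp (a * t) := by
    rw [cauchyFT_of_im_pos hz]
    ext t
    by_cases ht : 0 < t
    · simp only [indicator_of_mem (mem_Ioi.2 ht), smul_eq_mul]
      rw [mul_left_comm, ← Complex.exp_add]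
      simp only [a]
      push_cast
      ring_nf
    · simp [ht]
  rw [Real.fourier_real_eq_integral_exp_smul, h_integrand, integral_indicator measurableSet_Ioi,
    integral_const_mul, integral_exp_mul_complex_Ioi ha_re, Complex.real_smul]
  simp only [a]
  field_simp
  simp

theorem fourier_cauchyFT {z : ℂ} (hz : z.im ≠ 0) :
    𝓕 (cauchyFT z) = fun w : ℝ => (2 * Real.pi) • (1 / (z - (2 * Real.pi * w : ℝ))) := by
  ext w
  rcases hz.lt_or_gt with hz_neg | hz_pos
  · have h_reflect : 𝓕 (cauchyFT z) w = -𝓕 (cauchyFT (-z)) (-w) := by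
      rw [Real.fourier_eq, Real.fourier_eq, ← integral_neg, ← integral_neg_eq_self]
      simp [cauchyFT_neg]
    rw [h_reflect, fourier_cauchyFT_of_im_pos (by simpa using hz_neg), ← smul_neg, ← div_neg]
    push_cast
    ring_nf
  · exact fourier_cauchyFT_of_im_pos hz_pos w

theorem setIntegral_cexp_mul_cauchyKernel {z : ℂ} (hz : z.im ≠ 0) (R k : ℝ) :
    ∫ u in Icc (-R) R, Complex.exp (Complex.I * k * u) * (1 / (z - (u : ℂ))) =
      𝓕⁻ ((Icc (-R / (2 * Real.pi)) (R / (2 * Real.pi))).indicator (𝓕 (cauchyFT z))) k := by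
  rw [fourier_cauchyFT hz, ← preimage_const_mul_Icc₀ _ _ Real.two_pi_pos]
  exact setIntegral_cexp_smul_eq_fourierInv measurableSet_Icc (fun u : ℝ => 1 / (z - (u : ℂ))) k

end CauchyKernel

/-- **Fourier transform of the Cauchy kernel** (Lemma 9.4): for every non-real `z`, the
Fourier transform, in the L² sense and with the convention `φ̂(k) = ∫ e^{ikx} φ(x) dx`,
of `φ_z(x) = 1/(z-x)` is `t ↦ -sgn(Im z)·2πi·𝟙_{Im(z)·t>0}·e^{itz}`: the truncated
Fourier integrals converge in L² to this function. Consequently, `φ_z` belongs to the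
Sobolev space `H_s` for every real `s`, i.e. its Fourier transform has finite weighted
L² norm `∫ (1+2|k|)^{2s} |φ̂_z(k)|² dk < ∞`. -/
theorem fourier_transform_cauchy_kernel (z : ℂ) (hz : z.im ≠ 0) :
    Tendsto
      (fun R : ℝ => eLpNorm
        (fun k : ℝ =>
          (∫ u in Icc (-R) R, Complex.exp (Complex.I * k * u) * (1 / (z - (u : ℂ)))) -
            cauchyFT z k) 2 volume)
      atTop (𝓝 0) ∧
    ∀ s : ℝ, Integrable (fun k : ℝ => (1 + 2 * |k|) ^ (2 * s) * ‖cauchyFT z k‖ ^ 2) := by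
  refine ⟨?_, integrable_rpow_mul_norm_cauchyFT_sq hz⟩
  have h_cover : AECover volume atTop
      fun R : ℝ => Icc (-R / (2 * Real.pi)) (R / (2 * Real.pi)) :=
    aecover_Icc (tendsto_neg_atTop_atBot.atBot_div_const Real.two_pi_pos)
      (tendsto_id.atTop_div_const Real.two_pi_pos)
  simp_rw [setIntegral_cexp_mul_cauchyKernel hz]
  exact tendsto_eLpNorm_fourierInv_indicator_fourier_sub h_cover (fun _ => measure_Icc_lt_top.ne)
    (integrable_cauchyFT hz) (memLp_two_cauchyFT hz)

end
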